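/- Let L ≅ Sym(4) be the permutation group induced by the action of Sym(4) on the set of twelve ordered pairs of distinct elements of {1,2,3,4}. There exists a locally L pair (Γ,G) and a vertex x of Γ such that G_x^{[2]} ≠ 1. (Hence the conclusion G_x^{[3]} = 1 of the main theorem is best possible for n = 4.) -/

import Mathlib

open MulAction Pointwise

/-- The set of ordered pairs of distinct elements of `{1,…,n}`. -/
abbrev OPairs (n : ℕ) : Type := {p : Fin n × Fin n // p.1 ≠ p.2}

/-- `Sym(n)` acts on the ordered pairs of distinct elements. -/
instance opairsAction (n : ℕ) : MulAction (Equiv.Perm (Fin n)) (OPairs n) where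
  smul σ p := ⟨(σ p.1.1, σ p.1.2), fun h => p.2 (σ.injective h)⟩
  one_smul p := rfl
  mul_smul σ τ p := rfl

/-- Every element of `G` is an automorphism of `Γ`. -/
def PreservesAdj {V : Type*} (Γ : SimpleGraph V) (G : Subgroup (Equiv.Perm V)) : Prop :=
  ∀ g ∈ G, ∀ u v : V, Γ.Adj u v ↔ Γ.Adj (g u) (g v)

/-- The pointwise stabiliser in `G` of the ball of radius `i` around `x`. -/
def ballStab {V : Type*} (Γ : SimpleGraph V) (G : Subgroup (Equiv.Perm V)) (x : V) (i : ℕ) :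
    Subgroup G :=
  ⨅ (v : V) (_ : Γ.dist x v ≤ i), MulAction.stabilizer G v

/-- `(Γ, G)` is a locally `L` pair, for `L` the permutation group induced by `Sym(n)` on
ordered pairs of distinct elements of `{1,…,n}`. -/
def IsLocallyOPairs (n : ℕ) {V : Type*} (Γ : SimpleGraph V) (G : Subgroup (Equiv.Perm V)) :
    Prop :=
  PreservesAdj Γ G ∧ MulAction.IsPretransitive G V ∧
  ∀ x : V, ∃ (e : Γ.neighborSet x ≃ OPairs n)
      (φ : MulAction.stabilizer G x →* Equiv.Perm (Fin n)),
    Function.Surjective φ ∧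
    ∀ (g : MulAction.stabilizer G x) (v : Γ.neighborSet x),
      ((e.symm (φ g • e v) : Γ.neighborSet x) : V) = g • (v : V)

/-! ### General construction -/

/-- A cubic graph together with vectors attached to its vertices. -/
structure Dat (T M : Type) [AddCommGroup M] where
  n : T → Fin 3 → T
  n_inj : ∀ x, Function.Injective (n x)
  symm : ∀ x i, ∃ j, n (n x i) j = x
  notri : ∀ x i j k, n (n x i) j ≠ n x k
  loopless : ∀ x i, n x i ≠ x
  u : T → M
  u_inj : Function.Injective u
  u_ne : ∀ y, u y ≠ 0
  char2 : ∀ m : M, m + m = 0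
  sum : ∀ x, u (n x 0) + u (n x 1) + u (n x 2) = 0
  span : AddSubgroup.closure (Set.range u) = ⊤
  P : Subgroup (Equiv.Perm T)
  P_adj : ∀ h ∈ P, ∀ x i, ∃ j, h (n x i) = n (h x) j
  lift : ∀ h ∈ P, ∃ A : M ≃+ M, ∀ y, A (u y) = u (h y)
  trans : ∀ x y, ∃ h ∈ P, h x = y
  swap : ∀ x i j, i ≠ j → ∃ h ∈ P, h x = x ∧ h (n x i) = n x j ∧ h (n x j) = n x i
  conn : ∀ x y, Relation.ReflTransGen (fun a b => ∃ i, n a i = b) x y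

namespace Dat

variable {T M : Type} [AddCommGroup M] (D : Dat T M)

/-- The four vectors at `x`. -/
def q (x : T) : Fin 4 → M := Fin.cons 0 (fun i => D.u (D.n x i))

/-- The plane at `x`. -/
def pl (x : T) (d : M) : Prop := ∃ i, d = D.q x i

lemma q_zero (x : T) : D.q x 0 = 0 := rfl
lemma q_succ (x : T) (i : Fin 3) : D.q x i.succ = D.u (D.n x i) := rfl

lemma pl_zero (x : T) : D.pl x 0 := ⟨0, rfl⟩
lemma pl_u (x : T) (i : Fin 3) : D.pl x (D.u (D.n x i)) := ⟨i.succ, rfl⟩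

lemma pl_iff (x : T) (d : M) : D.pl x d ↔ d = 0 ∨ ∃ i, d = D.u (D.n x i) := by
  unfold pl
  rw [Fin.exists_fin_succ]
  rfl

lemma neg_eq {T M : Type} [AddCommGroup M] (D : Dat T M) (m : M) : -m = m := neg_eq_of_add_eq_zero_left (D.char2 m)
lemma add_cancel {T M : Type} [AddCommGroup M] (D : Dat T M) (m k : M) : m + (m + k) = k := by rw [← add_assoc, D.char2, zero_add]

lemma q_inj (x : T) : Function.Injective (D.q x) := by
  intro i j
  refine Fin.cases ?_ (fun i => ?_) i <;> refine Fin.cases ?_ (fun j => ?_) j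
  · intro _; rfl
  · intro h; exact absurd h.symm (D.u_ne _)
  · intro h; exact absurd h (D.u_ne _)
  · intro h; exact congrArg Fin.succ (D.n_inj x (D.u_inj h))

/-- sum of two different vectors at x is the third -/
lemma u_add (x : T) (i j : Fin 3) (h : i ≠ j) : ∃ k, D.u (D.n x i) + D.u (D.n x j) = D.u (D.n x k) := by
  have hs := D.sum x
  have key : ∀ a b c : M, a + b + c = 0 → a + b = c := fun a b c h => by
    rw [← D.neg_eq c]; exact eq_neg_of_add_eq_zero_left h
  set a := D.u (D.n x 0) with ha
  set b := D.u (D.n x 1) with hb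
  set c := D.u (D.n x 2) with hc
  have h1 : a + b = c := key _ _ _ hs
  have h2 : a + c = b := key _ _ _ (by rw [← hs]; abel)
  have h3 : b + c = a := key _ _ _ (by rw [← hs]; abel)
  fin_cases i <;> fin_cases j
  · exact absurd rfl h
  · exact ⟨2, h1⟩
  · exact ⟨1, h2⟩
  · exact ⟨2, (add_comm _ _).trans h1⟩
  · exact absurd rfl h
  · exact ⟨0, h3⟩
  · exact ⟨1, (add_comm _ _).trans h2⟩
  · exact ⟨0, (add_comm _ _).trans h3⟩
  · exact absurd rfl h

lemma pl_add {x : T} {d e : M} (hd : D.pl x d) (he : D.pl x e) : D.pl x (d + e) := by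
  rw [pl_iff] at *
  rcases hd with rfl | ⟨i, rfl⟩
  · simpa using he
  rcases he with rfl | ⟨j, rfl⟩
  · exact Or.inr ⟨i, by simp⟩
  by_cases h : i = j
  · subst h; exact Or.inl (D.char2 _)
  · exact Or.inr (D.u_add x i j h)

/-- differences of points of the plane -/
lemma q_diff (x : T) (i j : Fin 4) (h : i ≠ j) : ∃ k, D.q x j = D.q x i + D.u (D.n x k) := by
  have := D.pl_add (x := x) ⟨i, rfl⟩ ⟨j, rfl⟩
  rw [pl_iff] at this
  rcases this with h0 | ⟨k, hk⟩
  · exfalso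
    apply h
    apply D.q_inj x
    rw [← D.neg_eq (D.q x j)]; exact eq_neg_of_add_eq_zero_left h0
  · exact ⟨k, by rw [← hk, D.add_cancel]⟩

/-- The equivalence of representing pairs. -/
def std : Setoid (T × M) where
  r a b := a.1 = b.1 ∧ D.pl a.1 (a.2 + b.2)
  iseqv := by
    refine ⟨fun a => ⟨rfl, by rw [D.char2]; exact D.pl_zero _⟩, ?_, ?_⟩
    · rintro ⟨x, m⟩ ⟨y, k⟩ ⟨h, h'⟩
      obtain rfl : x = y := h
      exact ⟨rfl, by rw [add_comm]; exact h'⟩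
    · rintro ⟨x, m⟩ ⟨y, k⟩ ⟨z, l⟩ ⟨h, h'⟩ ⟨h2, h2'⟩
      obtain rfl : x = y := h
      obtain rfl : x = z := h2
      refine ⟨rfl, ?_⟩
      have := D.pl_add h' h2'
      dsimp only at this ⊢
      rwa [add_assoc, D.add_cancel] at this

/-- The vertices. -/
def V : Type := Quotient D.std

/-- The class of a pair. -/
def cl (x : T) (m : M) : D.V := Quotient.mk D.std (x, m)

lemma mk_eq {x y : T} {m k : M} : D.cl x m = D.cl y k ↔ x = y ∧ D.pl x (m + k) :=
  Quotient.eq (r := D.std)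

lemma mk_surj (s : D.V) : ∃ x m, s = D.cl x m := by
  induction s using Quotient.inductionOn with
  | h a => exact ⟨a.1, a.2, rfl⟩

/-- The graph. -/
def Gr : SimpleGraph D.V where
  Adj s t := ∃ x i m, s = D.cl x m ∧ t = D.cl (D.n x i) m
  symm := ⟨by
    rintro s t ⟨x, i, m, rfl, rfl⟩
    obtain ⟨j, hj⟩ := D.symm x i
    exact ⟨D.n x i, j, m, rfl, by rw [hj]⟩⟩
  loopless := ⟨by
    rintro s ⟨x, i, m, h, h'⟩
    rw [h, mk_eq] at h'
    exact D.loopless x i h'.1.symm⟩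

lemma adj_mk {x : T} {m : M} {t : D.V} :
    D.Gr.Adj (D.cl x m) t ↔ ∃ i k, t = D.cl (D.n x i) (m + D.q x k) := by
  constructor
  · rintro ⟨y, i, k, h, rfl⟩
    obtain ⟨rfl, j, hj⟩ := D.mk_eq.1 h
    exact ⟨i, j, by rw [← hj, D.add_cancel]⟩
  · rintro ⟨i, k, rfl⟩
    exact ⟨x, i, m + D.q x k, D.mk_eq.2 ⟨rfl, by rw [D.add_cancel]; exact ⟨k, rfl⟩⟩, rfl⟩

lemma reach_T (x y : T) (m : M) : D.Gr.Reachable (D.cl x m) (D.cl y m) := by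
  induction D.conn x y with
  | refl => exact SimpleGraph.Reachable.refl _
  | tail _ h ih =>
    obtain ⟨i, rfl⟩ := h
    exact ih.trans (SimpleGraph.Adj.reachable ⟨_, i, m, rfl, rfl⟩)

lemma reach_M (d : M) : ∀ (x : T) (m : M), D.Gr.Reachable (D.cl x m) (D.cl x (m + d)) := by
  have hd : d ∈ AddSubgroup.closure (Set.range D.u) := by rw [D.span]; trivial
  induction hd using AddSubgroup.closure_induction with
  | mem d hd =>
    obtain ⟨y, rfl⟩ := hd
    intro x m
    obtain ⟨j, hj⟩ := D.symm y 0
    have : D.cl (D.n y 0) m = D.cl (D.n y 0) (m + D.u y) :=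
      D.mk_eq.2 ⟨rfl, by
        rw [D.add_cancel]; have := D.pl_u (D.n y 0) j; rwa [hj] at this⟩
    have h1 := D.reach_T x (D.n y 0) m
    rw [this] at h1
    exact h1.trans (D.reach_T _ _ _)
  | zero => intro x m; rw [add_zero]
  | add a b _ _ ha hb =>
    intro x m
    rw [← add_assoc]
    exact (ha x m).trans (hb x _)
  | neg a _ ha => intro x m; rw [D.neg_eq]; exact ha x m

lemma connected [Nonempty T] : D.Gr.Connected := by
  haveI : Nonempty D.V := ⟨D.cl (Classical.arbitrary T) 0⟩
  refine ⟨fun s t => ?_⟩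
  obtain ⟨x, m, rfl⟩ := D.mk_surj s
  obtain ⟨y, k, rfl⟩ := D.mk_surj t
  have := D.reach_M (m + k) y m
  rw [D.add_cancel] at this
  exact (D.reach_T x y m).trans this

/-- `a` is an affine permutation with permutation part `h`. -/
def Aff (h : Equiv.Perm T) (a : Equiv.Perm M) : Prop :=
  h ∈ D.P ∧ ∀ m y, a (m + D.u y) = a m + D.u (h y)

variable {D}

lemma Aff.mul {h k : Equiv.Perm T} {a b : Equiv.Perm M} (H : D.Aff h a) (K : D.Aff k b) :
    D.Aff (h * k) (a * b) :=
  ⟨D.P.mul_mem H.1 K.1, fun m y => by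
    simp only [Equiv.Perm.mul_apply]; rw [K.2, H.2]⟩

lemma Aff.one : D.Aff 1 1 := ⟨D.P.one_mem, fun _ _ => rfl⟩

lemma Aff.inv {h : Equiv.Perm T} {a : Equiv.Perm M} (H : D.Aff h a) : D.Aff h⁻¹ a⁻¹ :=
  ⟨D.P.inv_mem H.1, fun m y => by
    apply a.injective
    rw [H.2]; simp⟩

lemma Aff.pl {h : Equiv.Perm T} {a : Equiv.Perm M} (H : D.Aff h a) {x : T} {m k : M}
    (hp : D.pl x (m + k)) : D.pl (h x) (a m + a k) := by
  rw [pl_iff] at hp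
  rcases hp with h0 | ⟨i, hi⟩
  · have : m = k := by
      rw [← D.neg_eq k]; exact eq_neg_of_add_eq_zero_left h0
    rw [this, D.char2]; exact D.pl_zero _
  · have : k = m + D.u (D.n x i) := by rw [← hi, D.add_cancel]
    rw [this, H.2, D.add_cancel]
    obtain ⟨j, hj⟩ := D.P_adj h H.1 x i
    rw [hj]; exact D.pl_u _ _

/-- The induced map on vertices. -/
def Aff.fn {h : Equiv.Perm T} {a : Equiv.Perm M} (H : D.Aff h a) : D.V → D.V :=
  Quotient.map' (s₁ := D.std) (s₂ := D.std) (fun p => (h p.1, a p.2)) (by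
    rintro ⟨x, m⟩ ⟨y, k⟩ ⟨e, h'⟩
    obtain rfl : x = y := e
    exact ⟨rfl, H.pl h'⟩)

lemma Aff.fn_mk {h : Equiv.Perm T} {a : Equiv.Perm M} (H : D.Aff h a) (x : T) (m : M) :
    H.fn (D.cl x m) = D.cl (h x) (a m) := rfl

/-- The induced permutation on vertices. -/
def Aff.perm {h : Equiv.Perm T} {a : Equiv.Perm M} (H : D.Aff h a) : Equiv.Perm D.V where
  toFun := H.fn
  invFun := H.inv.fn
  left_inv s := by
    obtain ⟨x, m, rfl⟩ := D.mk_surj s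
    rw [fn_mk, fn_mk]; simp
  right_inv s := by
    obtain ⟨x, m, rfl⟩ := D.mk_surj s
    rw [fn_mk, fn_mk]; simp

variable (D)

/-- The group. -/
def G : Subgroup (Equiv.Perm D.V) where
  carrier := {g | ∃ h a, D.Aff h a ∧ ∀ x m, g (D.cl x m) = D.cl (h x) (a m)}
  one_mem' := ⟨1, 1, Aff.one, fun _ _ => rfl⟩
  mul_mem' := by
    rintro g g' ⟨h, a, H, hg⟩ ⟨k, b, K, hk⟩
    exact ⟨_, _, H.mul K, fun x m => by rw [Equiv.Perm.mul_apply, hk, hg]; rfl⟩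
  inv_mem' := by
    rintro g ⟨h, a, H, hg⟩
    refine ⟨_, _, H.inv, fun x m => ?_⟩
    rw [Equiv.Perm.inv_eq_iff_eq, hg]; simp

variable {D}

lemma Aff.perm_mem {h : Equiv.Perm T} {a : Equiv.Perm M} (H : D.Aff h a) : H.perm ∈ D.G :=
  ⟨h, a, H, fun _ _ => rfl⟩

variable (D)

/-- Affine lifts with prescribed image of a point. -/
lemma exists_aff (h : Equiv.Perm T) (hh : h ∈ D.P) (m k : M) :
    ∃ a, D.Aff h a ∧ a m = k := by
  obtain ⟨A, hA⟩ := D.lift h hh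
  refine ⟨A.toEquiv.trans (Equiv.addRight (k - A m)), ⟨hh, fun l y => ?_⟩, ?_⟩
  · simp [hA]; abel
  · simp

lemma G_adj1 {g : Equiv.Perm D.V} (hg : g ∈ D.G) {s t : D.V} (h : D.Gr.Adj s t) :
    D.Gr.Adj (g s) (g t) := by
  obtain ⟨h', a, H, hg⟩ := hg
  obtain ⟨x, i, m, rfl, rfl⟩ := h
  obtain ⟨j, hj⟩ := D.P_adj h' H.1 x i
  exact ⟨h' x, j, a m, hg _ _, by rw [hg, hj]⟩

lemma G_adj : PreservesAdj D.Gr D.G := by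
  intro g hg s t
  refine ⟨D.G_adj1 hg, fun h => ?_⟩
  simpa using D.G_adj1 (D.G.inv_mem hg) h

lemma G_trans : MulAction.IsPretransitive D.G D.V := by
  constructor
  intro s t
  obtain ⟨x, m, rfl⟩ := D.mk_surj s
  obtain ⟨y, k, rfl⟩ := D.mk_surj t
  obtain ⟨h, hh, rfl⟩ := D.trans x y
  obtain ⟨a, H, rfl⟩ := D.exists_aff h hh m k
  exact ⟨⟨_, H.perm_mem⟩, rfl⟩

/-- direction index -/
noncomputable def dir (x : T) (p : OPairs 4) : Fin 3 :=
  (D.q_diff x p.1.1 p.1.2 p.2).choose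

lemma dir_spec (x : T) (p : OPairs 4) :
    D.q x p.1.2 = D.q x p.1.1 + D.u (D.n x (D.dir x p)) :=
  (D.q_diff x p.1.1 p.1.2 p.2).choose_spec

/-- The neighbour of `mk x m` attached to an ordered pair. -/
noncomputable def nbr (x : T) (m : M) (p : OPairs 4) : D.Gr.neighborSet (D.cl x m) :=
  ⟨D.cl (D.n x (D.dir x p)) (m + D.q x p.1.1), D.adj_mk.2 ⟨_, _, rfl⟩⟩

lemma nbr_bij (x : T) (m : M) : Function.Bijective (D.nbr x m) := by
  constructor
  · intro p p' h
    have h := D.mk_eq.1 (Subtype.ext_iff.1 h)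
    obtain ⟨h1, h2⟩ := h
    have h3 : m + D.q x p.1.1 + (m + D.q x p'.1.1) = D.q x p.1.1 + D.q x p'.1.1 := by
      rw [add_add_add_comm, D.char2, zero_add]
    rw [h3, pl_iff] at h2
    have h4 : p.1.1 = p'.1.1 := by
      by_contra hne
      obtain ⟨k, hk⟩ := D.q_diff x _ _ hne
      rw [hk, D.add_cancel] at h2
      rcases h2 with h0 | ⟨l, hl⟩
      · exact D.u_ne _ h0
      · exact D.notri _ _ _ _ (D.u_inj hl).symm
    have h5 := D.dir_spec x p
    rw [h1, h4, ← D.dir_spec x p'] at h5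
    exact Subtype.ext (Prod.ext h4 (D.q_inj x h5))
  · rintro ⟨t, ht⟩
    obtain ⟨i, k, rfl⟩ := D.adj_mk.1 ht
    obtain ⟨l, hl⟩ := D.pl_add (x := x) ⟨k, rfl⟩ (D.pl_u x i)
    have hne : k ≠ l := by
      rintro rfl
      exact D.u_ne (D.n x i) (by simpa using hl)
    refine ⟨⟨(k, l), hne⟩, Subtype.ext ?_⟩
    have := D.dir_spec x ⟨(k, l), hne⟩
    dsimp only at this
    rw [← hl] at this
    have := D.u_inj (add_left_cancel this)
    simp only [nbr]
    rw [← this]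

/-- Permutation on the points of a plane. -/
lemma exists_sigma {h : Equiv.Perm T} {a : Equiv.Perm M} (H : D.Aff h a) {x : T} {m : M}
    (hx : D.cl (h x) (a m) = D.cl x m) :
    ∃ σ : Equiv.Perm (Fin 4), ∀ i, a (m + D.q x i) = m + D.q x (σ i) := by
  obtain ⟨h1, h2⟩ := D.mk_eq.1 hx
  have key : ∀ i, ∃ j, a (m + D.q x i) = m + D.q x j := by
    intro i
    have h3 : D.pl x (m + (m + D.q x i)) := by rw [D.add_cancel]; exact ⟨i, rfl⟩
    have h4 := H.pl h3
    rw [h1] at h2 h4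
    obtain ⟨j, hj⟩ := D.pl_add h4 h2
    refine ⟨j, ?_⟩
    rw [← hj]
    have : m + (a m + a (m + D.q x i) + (a m + m)) =
      (m + m) + (a m + a m) + a (m + D.q x i) := by abel
    rw [this, D.char2, D.char2]; simp
  choose f hf using key
  have finj : Function.Injective f := by
    intro i j hij
    have := hf i
    rw [hij, ← hf j] at this
    exact D.q_inj x (add_left_cancel (a.injective this))
  exact ⟨Equiv.ofBijective f (Finite.injective_iff_bijective.1 finj), hf⟩

lemma nbr_equiv {g : Equiv.Perm D.V} {h : Equiv.Perm T} {a : Equiv.Perm M} (H : D.Aff h a)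
    (hg : ∀ x m, g (D.cl x m) = D.cl (h x) (a m)) {x : T} {m : M} (hx : h x = x)
    {σ : Equiv.Perm (Fin 4)} (hσ : ∀ i, a (m + D.q x i) = m + D.q x (σ i)) (p : OPairs 4) :
    g (D.nbr x m p) = D.nbr x m (σ • p) := by
  simp only [nbr]
  rw [hg, hσ]
  have h1 := D.dir_spec x p
  have h2 := D.dir_spec x (σ • p)
  have h3 := hσ p.1.2
  rw [h1, ← add_assoc, H.2, hσ, add_assoc] at h3
  have h3 := add_left_cancel h3
  change D.q x (σ p.1.2) = D.q x (σ p.1.1) + _ at h2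
  rw [h2] at h3
  rw [D.u_inj (add_left_cancel h3)]
  rfl

lemma faithful (σ τ : Equiv.Perm (Fin 4)) (h : ∀ p : OPairs 4, σ • p = τ • p) : σ = τ := by
  ext i
  obtain ⟨j, hj⟩ : ∃ j, i ≠ j := ⟨i + 1, by revert i; decide⟩
  have := congrArg (fun p : OPairs 4 => p.1.1) (h ⟨(i, j), hj⟩)
  exact congrArg Fin.val this

lemma swap_of (σ : Equiv.Perm (Fin 4)) (r i j : Fin 4) (h1 : r ≠ i) (h2 : r ≠ j) (hij : i ≠ j)
    (hr : σ r = r) (hi : σ i = j) (hj : σ j = i) : σ = Equiv.swap i j := by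
  revert σ r i j
  decide +kernel

lemma third (i j : Fin 4) : ∃ r, r ≠ i ∧ r ≠ j := by
  revert i j; decide

lemma locally_ : IsLocallyOPairs 4 D.Gr D.G := by
  refine ⟨D.G_adj, D.G_trans, fun s => ?_⟩
  obtain ⟨x, m, rfl⟩ := D.mk_surj s
  let e := Equiv.ofBijective _ (D.nbr_bij x m)
  have he : ∀ p, e p = D.nbr x m p := fun _ => rfl
  have key : ∀ g : MulAction.stabilizer D.G (D.cl x m), ∃ σ : Equiv.Perm (Fin 4),
      ∀ p, ((g : D.G) : Equiv.Perm D.V) (e p) = e (σ • p) := by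
    rintro ⟨⟨g, h, a, H, hg⟩, hs⟩
    have hs : g (D.cl x m) = D.cl x m := hs
    rw [hg] at hs
    obtain ⟨σ, hσ⟩ := D.exists_sigma H hs
    exact ⟨σ, D.nbr_equiv H hg (D.mk_eq.1 hs).1 hσ⟩
  choose f hf using key
  have huniq : ∀ (g : MulAction.stabilizer D.G (D.cl x m)) (σ : Equiv.Perm (Fin 4)),
      (∀ p, ((g : D.G) : Equiv.Perm D.V) (e p) = e (σ • p)) → f g = σ := by
    intro g σ h
    apply faithful
    intro p
    apply e.injective
    apply Subtype.ext
    rw [← hf, ← h]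
  let φ : MulAction.stabilizer D.G (D.cl x m) →* Equiv.Perm (Fin 4) :=
    MonoidHom.mk' f (by
      intro g g'
      apply huniq
      intro p
      rw [mul_smul, ← hf, ← hf]
      rfl)
  refine ⟨e.symm, φ, ?_, ?_⟩
  · rw [← MonoidHom.range_eq_top, eq_top_iff, ← Equiv.Perm.closure_isSwap,
      Subgroup.closure_le]
    rintro _ ⟨i, j, hij, rfl⟩
    obtain ⟨r, hri, hrj⟩ := third i j
    obtain ⟨y, hy⟩ := D.q_diff x r i hri
    obtain ⟨z, hz⟩ := D.q_diff x r j hrj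
    have hyz : y ≠ z := by
      rintro rfl
      exact hij (D.q_inj x (hy.trans hz.symm))
    obtain ⟨h, hh, hx, h1, h2⟩ := D.swap x y z hyz
    obtain ⟨a, H, ha⟩ := D.exists_aff h hh (m + D.q x r) (m + D.q x r)
    have ai : a (m + D.q x i) = m + D.q x j := by
      rw [hy, ← add_assoc, H.2, ha, h1, hz, add_assoc]
    have aj : a (m + D.q x j) = m + D.q x i := by
      rw [hz, ← add_assoc, H.2, ha, h2, hy, add_assoc]
    have hs : D.cl (h x) (a m) = D.cl x m := by
      have e1 : D.cl x m = D.cl x (m + D.q x r) :=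
        D.mk_eq.2 ⟨rfl, by rw [D.add_cancel]; exact ⟨r, rfl⟩⟩
      have e2 := congrArg H.fn e1
      rw [H.fn_mk, H.fn_mk, ha, hx, ← e1] at e2
      rw [hx]; exact e2
    obtain ⟨σ, hσ⟩ := D.exists_sigma H hs
    have cancel : ∀ k l, m + D.q x k = m + D.q x l → k = l :=
      fun k l h => D.q_inj x (add_left_cancel h)
    refine ⟨⟨⟨H.perm, H.perm_mem⟩, hs⟩, ?_⟩
    have e3 : σ = Equiv.swap i j := swap_of σ r i j hri hrj hij
      (cancel _ _ ((hσ r).symm.trans ha)) (cancel _ _ ((hσ i).symm.trans ai))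
      (cancel _ _ ((hσ j).symm.trans aj))
    rw [← e3]
    exact huniq _ _ (D.nbr_equiv H (fun _ _ => rfl) hx hσ)
  · intro g v
    obtain ⟨p, rfl⟩ := e.surjective v
    rw [Equiv.symm_symm, Equiv.symm_apply_apply]
    exact (hf g p).symm

lemma ball [Nonempty T] (x : T) (h : Equiv.Perm T) (hh : h ∈ D.P) (hne : h ≠ 1) (hx : h x = x)
    (h1 : ∀ i, h (D.n x i) = D.n x i)
    (h2 : ∀ i j, h (D.n (D.n x i) j) = D.n (D.n x i) j) :
    ballStab D.Gr D.G (D.cl x 0) 2 ≠ ⊥ := by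
  obtain ⟨a, H, ha⟩ := D.exists_aff h hh 0 0
  have hq : ∀ (m : M) (y : T) (k : Fin 4), (∀ i, h (D.n y i) = D.n y i) →
      a m = m → a (m + D.q y k) = m + D.q y k := by
    intro m y k hy hm
    rcases (D.pl_iff y (D.q y k)).1 ⟨k, rfl⟩ with h0 | ⟨i, hi⟩
    · rw [h0, add_zero, hm]
    · rw [hi, H.2, hm, hy]
  have A1 : ∀ t, D.Gr.Adj (D.cl x 0) t →
      ∃ i m, a m = m ∧ t = D.cl (D.n x i) m := by
    intro t ht
    obtain ⟨i, k, rfl⟩ := D.adj_mk.1 ht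
    exact ⟨i, _, hq _ _ _ h1 ha, rfl⟩
  have A2 : ∀ t, D.Gr.Adj (D.cl x 0) t → ∀ w, D.Gr.Adj t w → H.perm w = w := by
    intro t ht w hw
    obtain ⟨i, m, hm, rfl⟩ := A1 t ht
    obtain ⟨j, k, rfl⟩ := D.adj_mk.1 hw
    change D.cl (h _) (a _) = _
    rw [hq _ _ _ (h2 i) hm, h2]
  have hmem : (⟨H.perm, H.perm_mem⟩ : D.G) ∈ ballStab D.Gr D.G (D.cl x 0) 2 := by
    simp only [ballStab, Subgroup.mem_iInf]
    intro v hv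
    change H.perm v = v
    obtain ⟨w, hw⟩ := (D.connected).exists_walk_length_eq_dist (D.cl x 0) v
    rw [← hw] at hv
    match w, hv with
    | .nil, _ =>
      change D.cl (h _) (a _) = _
      rw [hx, ha]
    | .cons h .nil, _ =>
      obtain ⟨i, m, hm, rfl⟩ := A1 _ h
      change D.cl (_) (a _) = _
      rw [h1, hm]
    | .cons h (.cons h' .nil), _ => exact A2 _ h _ h'
    | .cons h (.cons h' (.cons _ _)), hv =>
      simp only [SimpleGraph.Walk.length_cons] at hv
      omega
  intro hbot
  rw [hbot, Subgroup.mem_bot] at hmem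
  apply hne
  ext y
  have : H.perm (D.cl y 0) = D.cl y 0 := by
    rw [show H.perm = 1 from congrArg Subtype.val hmem]; rfl
  exact (D.mk_eq.1 this).1

lemma main [Nonempty T] [Finite T] [Finite M] (x : T) (h : Equiv.Perm T) (hh : h ∈ D.P)
    (hne : h ≠ 1) (hx : h x = x)
    (h1 : ∀ i, h (D.n x i) = D.n x i)
    (h2 : ∀ i j, h (D.n (D.n x i) j) = D.n (D.n x i) j) :
    ∃ (V : Type) (_ : Fintype V) (Γ : SimpleGraph V) (G : Subgroup (Equiv.Perm V)),
      Γ.Connected ∧ IsLocallyOPairs 4 Γ G ∧ ∃ x : V, ballStab Γ G x 2 ≠ ⊥ := by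
  haveI : Finite D.V := inferInstanceAs (Finite (Quotient D.std))
  exact ⟨D.V, Fintype.ofFinite _, D.Gr, D.G, D.connected, D.locally_, _,
    D.ball x h hh hne hx h1 h2⟩

end Dat

/-! ### The Tutte 8-cage -/

namespace Cage

lemma perm_inv_apply {T : Type} (k : Equiv.Perm T) (x : T) : k⁻¹ (k x) = x :=
  k.symm_apply_apply x

lemma perm_apply_inv {T : Type} (k : Equiv.Perm T) (x : T) : k (k⁻¹ x) = x :=
  k.apply_symm_apply x

/-- table lookup -/
def look (l : List (Fin 30)) (i : Fin 30) : Fin 30 := l.getD i.val 0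

/-- The third neighbour besides `x - 1` and `x + 1`. -/
def jump : List (Fin 30) :=
  [17, 22, 9, 26, 13, 18, 23, 28, 15, 2, 19, 24, 29, 4, 21, 8, 25, 0, 5, 10, 27, 14, 1, 6, 11, 16, 3, 20, 7, 12]

/-- The neighbours in the cage. -/
def n (x : Fin 30) (i : Fin 3) : Fin 30 :=
  match i with
  | 0 => x + 1
  | 1 => x - 1
  | 2 => look jump x

/-- Bit masks of the sets of vertices at distance four. -/
def mask : List ℕ :=
  [84952400, 168339616, 286609472, 548046976, 290522369, 706775554, 68244485, 36317194, 89395217, 715268128, 339820625, 136478890, 72679748, 176816770, 352584773, 680003626, 273683540, 144714376, 356536580, 578855050, 16847189, 570559144, 335877392, 671785480, 269762837, 539501218, 4478273, 8563234, 21316628, 44597800]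

/-- Being at distance four. -/
def R (x y : Fin 30) : Bool := (mask.getD x.val 0).testBit y.val

/-- The automorphisms of the cage. -/
def P : Subgroup (Equiv.Perm (Fin 30)) where
  carrier := {h | (∀ x i, ∃ j, h (n x i) = n (h x) j) ∧ (∀ x i, ∃ j, h⁻¹ (n x i) = n (h⁻¹ x) j) ∧
    ∀ x y, R (h x) (h y) = R x y}
  one_mem' := ⟨fun x i => ⟨i, rfl⟩, fun x i => ⟨i, rfl⟩, fun _ _ => rfl⟩
  mul_mem' := by
    rintro g h ⟨g1, g2, g3⟩ ⟨h1, h2, h3⟩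
    refine ⟨fun x i => ?_, fun x i => ?_, fun x y => ?_⟩
    · obtain ⟨j, hj⟩ := h1 x i
      obtain ⟨k, hk⟩ := g1 (h x) j
      exact ⟨k, by rw [Equiv.Perm.mul_apply, hj, hk]; rfl⟩
    · obtain ⟨j, hj⟩ := g2 x i
      obtain ⟨k, hk⟩ := h2 (g⁻¹ x) j
      exact ⟨k, by rw [mul_inv_rev, Equiv.Perm.mul_apply, hj, hk]; rfl⟩
    · rw [Equiv.Perm.mul_apply, Equiv.Perm.mul_apply, g3, h3]
  inv_mem' := by
    rintro g ⟨g1, g2, g3⟩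
    refine ⟨g2, by simpa using g1, fun x y => ?_⟩
    rw [← g3 (g⁻¹ x) (g⁻¹ y)]; simp

/-- A permutation from two tables. -/
def pm (a b : List (Fin 30)) (h : ∀ i, look b (look a i) = i) (h' : ∀ i, look a (look b i) = i) :
    Equiv.Perm (Fin 30) := ⟨look a, look b, h, h'⟩

/-- table -/
def rhoA : List (Fin 30) :=
  [5, 4, 3, 26, 25, 24, 11, 10, 9, 2, 1, 0, 17, 16, 15, 8, 7, 6, 23, 22, 21, 14, 13, 12, 29, 28, 27, 20, 19, 18]

/-- table -/
def rhoB : List (Fin 30) :=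
  [11, 10, 9, 2, 1, 0, 17, 16, 15, 8, 7, 6, 23, 22, 21, 14, 13, 12, 29, 28, 27, 20, 19, 18, 5, 4, 3, 26, 25, 24]

/-- automorphism -/
def rho : Equiv.Perm (Fin 30) :=
  pm rhoA rhoB (by decide +kernel) (by decide +kernel)

lemma rho_mem : rho ∈ P := by
  refine ⟨?_, ?_, ?_⟩
  · change ∀ x i, ∃ j, look rhoA (n x i) = n (look rhoA x) j
    decide +kernel
  · change ∀ x i, ∃ j, look rhoB (n x i) = n (look rhoB x) j
    decide +kernel
  · change ∀ x y, R (look rhoA x) (look rhoA y) = R x y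
    decide +kernel

/-- table -/
def tauA : List (Fin 30) :=
  [21, 14, 15, 8, 9, 10, 11, 24, 25, 16, 17, 0, 1, 2, 3, 26, 27, 20, 19, 18, 5, 4, 13, 12, 29, 28, 7, 6, 23, 22]

/-- table -/
def tauB : List (Fin 30) :=
  [11, 12, 13, 14, 21, 20, 27, 26, 3, 4, 5, 6, 23, 22, 1, 2, 9, 10, 19, 18, 17, 0, 29, 28, 7, 8, 15, 16, 25, 24]

/-- automorphism -/
def tau : Equiv.Perm (Fin 30) :=
  pm tauA tauB (by decide +kernel) (by decide +kernel)

lemma tau_mem : tau ∈ P := by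
  refine ⟨?_, ?_, ?_⟩
  · change ∀ x i, ∃ j, look tauA (n x i) = n (look tauA x) j
    decide +kernel
  · change ∀ x i, ∃ j, look tauB (n x i) = n (look tauB x) j
    decide +kernel
  · change ∀ x y, R (look tauA x) (look tauA y) = R x y
    decide +kernel

/-- table -/
def saA : List (Fin 30) :=
  [0, 1, 2, 3, 26, 27, 20, 19, 10, 9, 8, 15, 16, 25, 24, 11, 12, 29, 28, 7, 6, 23, 22, 21, 14, 13, 4, 5, 18, 17]

/-- automorphism -/
def sa : Equiv.Perm (Fin 30) :=
  pm saA saA (by decide +kernel) (by decide +kernel)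

lemma sa_mem : sa ∈ P := by
  refine ⟨?_, ?_, ?_⟩
  · change ∀ x i, ∃ j, look saA (n x i) = n (look saA x) j
    decide +kernel
  · change ∀ x i, ∃ j, look saA (n x i) = n (look saA x) j
    decide +kernel
  · change ∀ x y, R (look saA x) (look saA y) = R x y
    decide +kernel

/-- table -/
def sbA : List (Fin 30) :=
  [0, 29, 12, 11, 10, 19, 20, 21, 14, 13, 4, 3, 2, 9, 8, 15, 16, 17, 18, 5, 6, 7, 28, 27, 26, 25, 24, 23, 22, 1]

/-- automorphism -/
def sb : Equiv.Perm (Fin 30) :=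
  pm sbA sbA (by decide +kernel) (by decide +kernel)

lemma sb_mem : sb ∈ P := by
  refine ⟨?_, ?_, ?_⟩
  · change ∀ x i, ∃ j, look sbA (n x i) = n (look sbA x) j
    decide +kernel
  · change ∀ x i, ∃ j, look sbA (n x i) = n (look sbA x) j
    decide +kernel
  · change ∀ x y, R (look sbA x) (look sbA y) = R x y
    decide +kernel

/-- table -/
def scA : List (Fin 30) :=
  [0, 17, 16, 15, 14, 21, 20, 27, 26, 25, 24, 11, 12, 13, 4, 3, 2, 1, 22, 23, 6, 5, 18, 19, 10, 9, 8, 7, 28, 29]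

/-- automorphism -/
def sc : Equiv.Perm (Fin 30) :=
  pm scA scA (by decide +kernel) (by decide +kernel)

lemma sc_mem : sc ∈ P := by
  refine ⟨?_, ?_, ?_⟩
  · change ∀ x i, ∃ j, look scA (n x i) = n (look scA x) j
    decide +kernel
  · change ∀ x i, ∃ j, look scA (n x i) = n (look scA x) j
    decide +kernel
  · change ∀ x y, R (look scA x) (look scA y) = R x y
    decide +kernel

/-- table -/
def blA : List (Fin 30) :=
  [0, 1, 2, 9, 10, 19, 20, 27, 26, 3, 4, 13, 12, 11, 24, 25, 16, 17, 18, 5, 6, 23, 22, 21, 14, 15, 8, 7, 28, 29]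

/-- automorphism -/
def bl : Equiv.Perm (Fin 30) :=
  pm blA blA (by decide +kernel) (by decide +kernel)

lemma bl_mem : bl ∈ P := by
  refine ⟨?_, ?_, ?_⟩
  · change ∀ x i, ∃ j, look blA (n x i) = n (look blA x) j
    decide +kernel
  · change ∀ x i, ∃ j, look blA (n x i) = n (look blA x) j
    decide +kernel
  · change ∀ x y, R (look blA x) (look blA y) = R x y
    decide +kernel


lemma trans0 : ∀ x : Fin 30, ∃ i : Fin 10, ∃ j : Fin 3,
    (look rhoA)^[i.val] ((look tauA)^[j.val] 0) = x := by decide +kernel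

lemma exists_from0 (x : Fin 30) : ∃ h ∈ P, h 0 = x := by
  obtain ⟨i, j, h⟩ := trans0 x
  refine ⟨rho ^ i.val * tau ^ j.val,
    P.mul_mem (P.pow_mem rho_mem _) (P.pow_mem tau_mem _), ?_⟩
  rw [Equiv.Perm.mul_apply, ← Equiv.Perm.iterate_eq_pow, ← Equiv.Perm.iterate_eq_pow]
  exact h

lemma swap0 (i j : Fin 3) (hij : i ≠ j) :
    ∃ h ∈ P, h 0 = 0 ∧ h (n 0 i) = n 0 j ∧ h (n 0 j) = n 0 i := by
  have H : ∀ i j : Fin 3, i ≠ j →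
      (sa 0 = 0 ∧ sa (n 0 i) = n 0 j ∧ sa (n 0 j) = n 0 i) ∨
      (sb 0 = 0 ∧ sb (n 0 i) = n 0 j ∧ sb (n 0 j) = n 0 i) ∨
      (sc 0 = 0 ∧ sc (n 0 i) = n 0 j ∧ sc (n 0 j) = n 0 i) := by decide +kernel
  rcases H i j hij with h | h | h
  · exact ⟨sa, sa_mem, h⟩
  · exact ⟨sb, sb_mem, h⟩
  · exact ⟨sc, sc_mem, h⟩

lemma n_inj : ∀ x i j, n x i = n x j → i = j := by decide +kernel

lemma swapx (x : Fin 30) (i j : Fin 3) (hij : i ≠ j) :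
    ∃ h ∈ P, h x = x ∧ h (n x i) = n x j ∧ h (n x j) = n x i := by
  obtain ⟨k, hk, rfl⟩ := exists_from0 x
  obtain ⟨i', hi⟩ := hk.2.1 (k 0) i
  obtain ⟨j', hj⟩ := hk.2.1 (k 0) j
  rw [perm_inv_apply] at hi hj
  have hne : i' ≠ j' := by
    rintro rfl
    exact hij (n_inj _ _ _ (k⁻¹.injective (hi.trans hj.symm)))
  obtain ⟨s, hs, s0, s1, s2⟩ := swap0 i' j' hne
  refine ⟨k * s * k⁻¹, P.mul_mem (P.mul_mem hk hs) (P.inv_mem hk), ?_, ?_, ?_⟩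
  · simp [s0]
  · rw [Equiv.Perm.mul_apply, Equiv.Perm.mul_apply, hi, s1, ← hj, perm_apply_inv]
  · rw [Equiv.Perm.mul_apply, Equiv.Perm.mul_apply, hj, s2, ← hi, perm_apply_inv]

/-- The vectors. -/
def w (x : Fin 30) : Fin 30 → ZMod 2 := fun z => if R x z then 1 else 0

/-- The span of the vectors. -/
abbrev M : Type := AddSubgroup.closure (Set.range w)

/-- The vectors, in their span. -/
def u (x : Fin 30) : M := ⟨w x, AddSubgroup.subset_closure ⟨x, rfl⟩⟩

lemma w_inj_aux : ∀ x y : Fin 30, (∀ z, R x z = R y z) → x = y := by decide +kernel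
lemma w_ne_aux : ∀ x : Fin 30, ∃ z, R x z = true := by decide +kernel
lemma sum_aux : ∀ x z : Fin 30, w (n x 0) z + w (n x 1) z + w (n x 2) z = 0 := by decide +kernel

lemma w_eq (x z : Fin 30) : w x z = 1 ↔ R x z = true := by
  unfold w
  split_ifs with h <;> simp [h]

lemma u_inj : Function.Injective u := by
  intro x y h
  have h : w x = w y := congrArg Subtype.val h
  apply w_inj_aux
  intro z
  rw [Bool.eq_iff_iff, ← w_eq, ← w_eq, h]

lemma lift (h : Equiv.Perm (Fin 30)) (hh : h ∈ P) : ∃ A : M ≃+ M, ∀ y, A (u y) = u (h y) := by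
  have key : ∀ h ∈ P, ∀ m ∈ AddSubgroup.closure (Set.range w),
      (fun z => m (h⁻¹ z)) ∈ AddSubgroup.closure (Set.range w) := by
    intro h hh m hm
    induction hm using AddSubgroup.closure_induction with
    | mem d hd =>
      obtain ⟨y, rfl⟩ := hd
      apply AddSubgroup.subset_closure
      refine ⟨h y, ?_⟩
      funext z
      have := hh.2.2 y (h⁻¹ z)
      rw [perm_apply_inv] at this
      simp only [w, this]
    | zero => exact zero_mem _
    | add a b _ _ ha hb => exact add_mem ha hb
    | neg a _ ha => exact neg_mem ha
  refine ⟨{ toFun := fun m => ⟨_, key h hh m.1 m.2⟩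
            invFun := fun m => ⟨_, key h⁻¹ (P.inv_mem hh) m.1 m.2⟩
            left_inv := ?_
            right_inv := ?_
            map_add' := ?_ }, ?_⟩
  · intro m; apply Subtype.ext; funext z; simp
  · intro m; apply Subtype.ext; funext z; simp
  · intro m k; rfl
  · intro y
    apply Subtype.ext
    funext z
    have := hh.2.2 y (h⁻¹ z)
    rw [perm_apply_inv] at this
    simp [u, w, this]

lemma span : AddSubgroup.closure (Set.range u) = ⊤ := by
  rw [eq_top_iff]
  rintro ⟨m, hm⟩ -
  induction hm using AddSubgroup.closure_induction with
  | mem d hd =>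
    obtain ⟨y, rfl⟩ := hd
    exact AddSubgroup.subset_closure ⟨y, rfl⟩
  | zero => exact zero_mem _
  | add a b _ _ ha hb => exact add_mem ha hb
  | neg a _ ha => exact neg_mem ha

lemma conn (x y : Fin 30) : Relation.ReflTransGen (fun a b => ∃ i, n a i = b) x y := by
  have key : ∀ k : ℕ, Relation.ReflTransGen (fun a b => ∃ i, n a i = b) x
      ((fun z : Fin 30 => z + 1)^[k] x) := by
    intro k
    induction k with
    | zero => exact .refl
    | succ k ih =>
      rw [Function.iterate_succ_apply']
      exact ih.tail ⟨0, rfl⟩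
  have H : ∀ x y : Fin 30, ∃ k : Fin 30, (fun z : Fin 30 => z + 1)^[k.val] x = y := by
    decide +kernel
  obtain ⟨k, hk⟩ := H x y
  have := key k.val
  rwa [hk] at this

/-- The data of the cage. -/
def dat : Dat (Fin 30) M where
  n := n
  n_inj x i j h := n_inj x i j h
  symm := by decide +kernel
  notri := by decide +kernel
  loopless := by decide +kernel
  u := u
  u_inj := u_inj
  u_ne y h := by
    have h : w y = 0 := congrArg Subtype.val h
    obtain ⟨z, hz⟩ := w_ne_aux y
    have := (w_eq y z).2 hz
    rw [h] at this
    exact absurd this zero_ne_one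
  char2 m := by
    apply Subtype.ext
    funext z
    exact CharTwo.add_self_eq_zero _
  sum x := by
    apply Subtype.ext
    funext z
    exact sum_aux x z
  span := span
  P := P
  P_adj h hh := hh.1
  lift := lift
  trans x y := by
    obtain ⟨h, hh, rfl⟩ := exists_from0 x
    obtain ⟨k, hk, rfl⟩ := exists_from0 y
    exact ⟨k * h⁻¹, P.mul_mem hk (P.inv_mem hh), by simp⟩
  swap := swapx
  conn := conn

end Cage

/-- there is a locally `L` pair `(Γ,G)`, for `L ≅ Sym(4)` acting on the
twelve ordered pairs of distinct elements of `{1,2,3,4}`, and a vertex `x` with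
`G_x^{[2]} ≠ 1`; hence the bound `G_x^{[3]} = 1` is best possible for `n = 4`. -/
theorem stmt_12 :
    ∃ (V : Type) (_ : Fintype V) (Γ : SimpleGraph V) (G : Subgroup (Equiv.Perm V)),
      Γ.Connected ∧ IsLocallyOPairs 4 Γ G ∧ ∃ x : V, ballStab Γ G x 2 ≠ ⊥ := by
  refine Cage.dat.main 0 Cage.bl Cage.bl_mem ?_ ?_ ?_ ?_
  · intro h
    have := congrArg (fun g : Equiv.Perm (Fin 30) => g 3) h
    revert this
    decide +kernel
  · decide +kernel
  · change ∀ i, Cage.look Cage.blA (Cage.n 0 i) = Cage.n 0 i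
    decide +kernel
  · change ∀ i j, Cage.look Cage.blA (Cage.n (Cage.n 0 i) j) = Cage.n (Cage.n 0 i) j
    decide +kernel
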